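/- For all positive integers n₁, n₂ and k, writing A = 10n₁, B = 10n₂−9, and N = 4k·A·B − 10(n₁+n₂) + 9 (so that N = 4kAB − A − B > 0), the rational number 4/N equals 1/(kAB) + 1/(kA·N) + 1/(kB·N). -/

import Mathlib

/-!
Over the common denominator `k * a * b * n`, the sum `1 / (k * a * b) + 1 / (k * a * n) +
1 / (k * b * n)` has numerator `n + a + b`, which is `m * k * a * b` when
`n = m * k * a * b - a - b`; so it equals `m / n`. For even `m` and integers `a`, `b` of opposite
parity, `n` is odd, hence nonzero whatever the signs of `k`, `a` and `b`.
-/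

theorem div_eq_one_div_add_one_div_add_one_div {K : Type*} [Semifield K] {m k a b n : K}
    (hk : k ≠ 0) (ha : a ≠ 0) (hb : b ≠ 0) (hn : n ≠ 0) (h : n + a + b = m * k * a * b) :
    m / n = 1 / (k * a * b) + 1 / (k * a * n) + 1 / (k * b * n) := by
  have h_numerator :
      1 / (k * a * b) + 1 / (k * a * n) + 1 / (k * b * n) = (n + a + b) / (k * a * b * n) := by
    field_simp
    ring
  rw [h_numerator, h]
  field_simp

theorem odd_mul_sub_sub_of_even {R : Type*} [Ring R] {m a b : R} (hm : Even m)
    (hab : Odd (a + b)) (k : R) : Odd (m * k * a * b - a - b) := by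
  have h_even : Even (m * k * a * b) := ((hm.mul_right k).mul_right a).mul_right b
  rw [sub_sub]
  exact h_even.sub_odd hab

theorem erdos_straus_identity_19_general {K : Type*} [Field K] [CharZero K] {n₁ k : ℤ}
    (hn₁ : n₁ ≠ 0) (hk : k ≠ 0) (n₂ : ℤ) :
    (4 : K) / ((4 * k * (10 * n₁) * (10 * n₂ - 9) - 10 * (n₁ + n₂) + 9 : ℤ)) =
      1 / ((k : K) * ((10 * n₁ : ℤ)) * ((10 * n₂ - 9 : ℤ))) +
        1 / ((k : K) * ((10 * n₁ : ℤ)) *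
          ((4 * k * (10 * n₁) * (10 * n₂ - 9) - 10 * (n₁ + n₂) + 9 : ℤ))) +
        1 / ((k : K) * ((10 * n₂ - 9 : ℤ)) *
          ((4 * k * (10 * n₁) * (10 * n₂ - 9) - 10 * (n₁ + n₂) + 9 : ℤ))) := by
  have ha : 10 * n₁ ≠ 0 := by omega
  have hb : 10 * n₂ - 9 ≠ 0 := by omega
  have hab : Odd (10 * n₁ + (10 * n₂ - 9)) := ⟨5 * n₁ + 5 * n₂ - 5, by ring⟩
  have hN : 4 * k * (10 * n₁) * (10 * n₂ - 9) - 10 * (n₁ + n₂) + 9 =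
      4 * k * (10 * n₁) * (10 * n₂ - 9) - 10 * n₁ - (10 * n₂ - 9) := by ring
  have hN_odd : Odd (4 * k * (10 * n₁) * (10 * n₂ - 9) - 10 * n₁ - (10 * n₂ - 9)) :=
    odd_mul_sub_sub_of_even (by decide) hab k
  have hN_ne_zero : 4 * k * (10 * n₁) * (10 * n₂ - 9) - 10 * n₁ - (10 * n₂ - 9) ≠ 0 :=
    fun h_zero ↦ Int.not_odd_zero (h_zero ▸ hN_odd)
  rw [hN]
  apply div_eq_one_div_add_one_div_add_one_div (Int.cast_ne_zero.mpr hk)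
    (Int.cast_ne_zero.mpr ha) (Int.cast_ne_zero.mpr hb) (Int.cast_ne_zero.mpr hN_ne_zero)
  push_cast
  ring

theorem erdos_straus_identity_19 (n₁ n₂ k : ℤ) (h₁ : 0 < n₁) (h₂ : 0 < n₂)
    (hk : 0 < k) :
    (4 : ℚ) / ((4 * k * (10 * n₁) * (10 * n₂ - 9) - 10 * (n₁ + n₂) + 9 : ℤ)) =
      1 / ((k : ℚ) * ((10 * n₁ : ℤ)) * ((10 * n₂ - 9 : ℤ))) +
        1 / ((k : ℚ) * ((10 * n₁ : ℤ)) *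
          ((4 * k * (10 * n₁) * (10 * n₂ - 9) - 10 * (n₁ + n₂) + 9 : ℤ))) +
        1 / ((k : ℚ) * ((10 * n₂ - 9 : ℤ)) *
          ((4 * k * (10 * n₁) * (10 * n₂ - 9) - 10 * (n₁ + n₂) + 9 : ℤ))) :=
  erdos_straus_identity_19_general h₁.ne' hk.ne' n₂
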